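/- If the fourth smallest eigenvalue of the rigidity Laplacian is positive, λ_4(E(G,p)) > 0 (equivalently rank E(G,p) ≥ 2n − 3), then rank(H) = n − 1 and the graph G is connected. That is, maintenance of rigidity implies maintenance of graph connectivity. -/

import Mathlib

open Matrix
open scoped Kronecker

noncomputable section

/-- Incidence matrix of the graph whose `k`-th (oriented) edge goes from vertex `t k`
to vertex `h k`: entry `1` where the edge sinks, `-1` where it leaves, `0` otherwise. -/
def inc {n m : ℕ} (t h : Fin m → Fin n) : Matrix (Fin m) (Fin n) ℝ :=
  fun k i => if i = h k then 1 else if i = t k then -1 else 0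

/-- `H̄ = H ⊗ I₂ ∈ ℝ^{2m × 2n}`. -/
def Hbar {n m : ℕ} (t h : Fin m → Fin n) : Matrix (Fin m × Fin 2) (Fin n × Fin 2) ℝ :=
  inc t h ⊗ₖ (1 : Matrix (Fin 2) (Fin 2) ℝ)

/-- The relative position `z_k = p_i - p_j` for the `k`-th edge, oriented from
`j = t k` to `i = h k`; these are the 2-dimensional blocks of `z = H̄ p`. -/
def zvec {n m : ℕ} (t h : Fin m → Fin n) (p : Fin n → Fin 2 → ℝ) (k : Fin m) : Fin 2 → ℝ :=
  fun a => p (h k) a - p (t k) a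

/-- `Z = blockdiag(z₁, …, z_m) ∈ ℝ^{2m × m}`. -/
def Zmat {n m : ℕ} (t h : Fin m → Fin n) (p : Fin n → Fin 2 → ℝ) :
    Matrix (Fin m × Fin 2) (Fin m) ℝ :=
  fun ka l => if ka.1 = l then zvec t h p ka.1 ka.2 else 0

/-- The rigidity matrix `R(p) = Zᵀ H̄ ∈ ℝ^{m × 2n}`. -/
def rigMat {n m : ℕ} (t h : Fin m → Fin n) (p : Fin n → Fin 2 → ℝ) :
    Matrix (Fin m) (Fin n × Fin 2) ℝ :=
  (Zmat t h p)ᵀ * Hbar t h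


/-- The `i`-th smallest value (0-indexed, counted with multiplicity) of a finite family
of reals, obtained by sorting the values in increasing order. -/
def kthSmallest {ι : Type*} [Fintype ι] (f : ι → ℝ) (i : ℕ) : ℝ :=
  ((Finset.univ.val.map f).sort (· ≤ ·)).getD i 0


theorem sorted_getD_pos (l : List ℝ) (hs : l.Pairwise (· ≤ ·)) (h0 : ∀ x ∈ l, 0 ≤ x) :
    ∀ i, i < l.length → (0 < l.getD i 0 ↔ l.count 0 ≤ i) := by
  induction l with
  | nil => intro i hi; simp at hi
  | cons a l ih =>
    intro i hi
    rw [List.pairwise_cons] at hs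
    have ha : 0 ≤ a := h0 a (by simp)
    rcases ha.eq_or_lt with ha | ha
    · subst ha
      cases i with
      | zero => simp
      | succ i =>
        have := ih hs.2 (fun x hx => h0 x (by simp [hx])) i (by simpa using hi)
        simpa using this
    · have hpos : ∀ x ∈ a :: l, 0 < x := by
        intro x hx
        rcases List.mem_cons.1 hx with rfl | hx
        · exact ha
        · exact ha.trans_le (hs.1 x hx)
      have hc : (a :: l).count 0 = 0 := by
        rw [List.count_eq_zero]
        intro hx
        exact lt_irrefl _ (hpos 0 hx)
      rw [hc, List.getD_eq_getElem _ _ hi]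
      simpa using hpos _ (List.getElem_mem hi)

theorem kthSmallest_pos_iff {ι : Type*} [Fintype ι] (f : ι → ℝ) (hf : ∀ i, 0 ≤ f i) (i : ℕ)
    (hi : i < Fintype.card ι) :
    0 < kthSmallest f i ↔ Fintype.card ι ≤ Fintype.card {j // f j ≠ 0} + i := by
  classical
  unfold kthSmallest
  rw [sorted_getD_pos _ (Multiset.pairwise_sort _ _)
    (by intro x hx
        rw [Multiset.mem_sort, Multiset.mem_map] at hx
        obtain ⟨j, -, rfl⟩ := hx
        exact hf j) i (by simpa using hi)]
  rw [← Multiset.coe_count, Multiset.sort_eq, Multiset.count_map]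
  have h1 : (Multiset.filter (fun a => (0:ℝ) = f a) Finset.univ.val).card
      = Fintype.card {j // f j = 0} := by
    rw [Fintype.card_subtype]
    simp only [eq_comm]
    rfl
  have h2 := Fintype.card_subtype_compl (fun j => f j = 0)
  have h3 := Fintype.card_subtype_le (fun j => f j = 0)
  rw [h1]
  simp only [ne_eq] at *
  omega

theorem inc_mulVec {n m : ℕ} (t h : Fin m → Fin n) (hloop : ∀ k, t k ≠ h k)
    (u : Fin n → ℝ) (k : Fin m) : (inc t h *ᵥ u) k = u (h k) - u (t k) := by
  have : ∀ i, inc t h k i * u i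
      = (if i = h k then u i else 0) - (if i = t k then u i else 0) := by
    intro i
    have := hloop k
    unfold inc
    by_cases h1 : i = h k
    · have : i ≠ t k := by rw [h1]; exact (hloop k).symm
      simp [h1, (hloop k).symm]
    · by_cases h2 : i = t k <;> simp [h1, h2, hloop k]
  simp [Matrix.mulVec, dotProduct, this]

theorem Hbar_mulVec {n m : ℕ} (t h : Fin m → Fin n)
    (x : Fin n × Fin 2 → ℝ) (k : Fin m) (a : Fin 2) :
    (Hbar t h *ᵥ x) (k, a) = (inc t h *ᵥ (fun i => x (i, a))) k := by
  simp [Hbar, Matrix.mulVec, dotProduct, Fintype.sum_prod_type, Matrix.one_apply]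

theorem rank_add_ker {m n : Type*} [Fintype m] [Fintype n] [DecidableEq n] (A : Matrix m n ℝ) :
    A.rank + Module.finrank ℝ (LinearMap.ker A.mulVecLin) = Fintype.card n := by
  have := LinearMap.finrank_range_add_finrank_ker A.mulVecLin
  simpa [Matrix.rank] using this

/-- Interleaving two vectors. -/
def interleave (n : ℕ) : ((Fin n → ℝ) × (Fin n → ℝ)) →ₗ[ℝ] (Fin n × Fin 2 → ℝ) where
  toFun uv := fun q => if q.2 = 0 then uv.1 q.1 else uv.2 q.1
  map_add' x y := by
    ext q; by_cases hq : q.2 = 0 <;> simp [hq]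
  map_smul' c x := by
    ext q; by_cases hq : q.2 = 0 <;> simp [hq]

theorem rank_Hbar_le {n m : ℕ} (t h : Fin m → Fin n) :
    (Hbar t h).rank ≤ 2 * (inc t h).rank := by
  have h1 := rank_add_ker (inc t h)
  have h2 := rank_add_ker (Hbar t h)
  have h3 : Module.finrank ℝ (LinearMap.ker (inc t h).mulVecLin × LinearMap.ker (inc t h).mulVecLin)
      ≤ Module.finrank ℝ (LinearMap.ker (Hbar t h).mulVecLin) := by
    let K := LinearMap.ker (inc t h).mulVecLin
    let f : (K × K) →ₗ[ℝ] (Fin n × Fin 2 → ℝ) :=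
      interleave n ∘ₗ (K.subtype.prodMap K.subtype)
    have hf : ∀ x, f x ∈ LinearMap.ker (Hbar t h).mulVecLin := by
      rintro ⟨⟨u, hu⟩, ⟨v, hv⟩⟩
      rw [LinearMap.mem_ker, Matrix.mulVecLin_apply] at hu hv ⊢
      ext ⟨k, a⟩
      rw [Hbar_mulVec]
      fin_cases a
      · exact congrFun hu k
      · exact congrFun hv k
    apply LinearMap.finrank_le_finrank_of_injective (f := f.codRestrict _ hf)
    intro x y hxy
    have hxy' : f x = f y := congrArg Subtype.val hxy
    refine Prod.ext (Subtype.ext (funext fun i => ?_)) (Subtype.ext (funext fun i => ?_))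
    · exact congrFun hxy' (i, 0)
    · exact congrFun hxy' (i, 1)
  rw [Module.finrank_prod] at h3
  simp only [Fintype.card_prod, Fintype.card_fin] at h1 h2
  omega

/-- if the fourth smallest eigenvalue (counted with multiplicity) of the
rigidity Laplacian `E(G,p) = H̄ᵀ Z W Zᵀ H̄` is positive — equivalently, since `E` is
positive semidefinite, `rank E ≥ 2n - 3` — then the incidence matrix has rank `n - 1`
and the graph is connected. -/
theorem stmt12 {n m : ℕ} (hn : 2 ≤ n) (t h : Fin m → Fin n) (hloop : ∀ k, t k ≠ h k)
    (p : Fin n → Fin 2 → ℝ) (w : Fin m → ℝ) (hw : ∀ k, 0 < w k)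
    (E : Matrix (Fin n × Fin 2) (Fin n × Fin 2) ℝ)
    (hE : E = (Hbar t h)ᵀ * (Zmat t h p * Matrix.diagonal w * (Zmat t h p)ᵀ) * Hbar t h)
    (hEherm : E.IsHermitian)
    (G : SimpleGraph (Fin n))
    (hG : G = SimpleGraph.fromRel (fun i j => ∃ k, t k = i ∧ h k = j)) :
    (0 < kthSmallest hEherm.eigenvalues 3 ↔ 2 * n - 3 ≤ E.rank) ∧
    (0 < kthSmallest hEherm.eigenvalues 3 → (inc t h).rank = n - 1 ∧ G.Connected) := by
  have hpsd : E.PosSemidef := by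
    have hd : (Matrix.diagonal w).PosSemidef :=
      Matrix.PosSemidef.diagonal (fun k => (hw k).le)
    have h1 := (hd.mul_mul_conjTranspose_same (Zmat t h p)).conjTranspose_mul_mul_same (Hbar t h)
    rw [hE]
    simpa only [Matrix.conjTranspose_eq_transpose_of_trivial] using h1
  have hiff : 0 < kthSmallest hEherm.eigenvalues 3 ↔ 2 * n - 3 ≤ E.rank := by
    rw [kthSmallest_pos_iff _ (fun i => hpsd.eigenvalues_nonneg i) 3 (by simp; omega),
      hEherm.rank_eq_card_non_zero_eigs]
    simp only [Fintype.card_prod, Fintype.card_fin]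
    omega
  refine ⟨hiff, fun hpos => ?_⟩
  have hr := hiff.1 hpos
  have hEr : E.rank ≤ (Hbar t h).rank := by
    rw [hE]; exact Matrix.rank_mul_le_right _ _
  have hHb := rank_Hbar_le t h
  have hk := rank_add_ker (inc t h)
  rw [Fintype.card_fin] at hk
  have hone : (fun _ => 1 : Fin n → ℝ) ∈ LinearMap.ker (inc t h).mulVecLin := by
    rw [LinearMap.mem_ker, Matrix.mulVecLin_apply]
    ext k
    rw [inc_mulVec t h hloop]; simp
  let i0 : Fin n := ⟨0, by omega⟩
  have hne : (⟨_, hone⟩ : LinearMap.ker (inc t h).mulVecLin) ≠ 0 := by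
    intro h0
    have := congrFun (congrArg Subtype.val h0) i0
    simp at this
  have hkpos : 0 < Module.finrank ℝ (LinearMap.ker (inc t h).mulVecLin) :=
    Module.finrank_pos_iff_exists_ne_zero.2 ⟨_, hne⟩
  have hk1 : Module.finrank ℝ (LinearMap.ker (inc t h).mulVecLin) = 1 := by omega
  refine ⟨by omega, ?_⟩
  have : Nonempty (Fin n) := ⟨i0⟩
  refine SimpleGraph.Connected.mk (fun a b => ?_)
  by_contra hab
  classical
  have hadj : ∀ k, G.Adj (t k) (h k) := by
    intro k
    rw [hG, SimpleGraph.fromRel_adj]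
    exact ⟨hloop k, Or.inl ⟨k, rfl, rfl⟩⟩
  have hS : (fun i => if G.Reachable a i then 1 else 0 : Fin n → ℝ)
      ∈ LinearMap.ker (inc t h).mulVecLin := by
    rw [LinearMap.mem_ker, Matrix.mulVecLin_apply]
    ext k
    rw [inc_mulVec t h hloop]
    have : G.Reachable a (h k) ↔ G.Reachable a (t k) :=
      ⟨fun q => q.trans (hadj k).symm.reachable, fun q => q.trans (hadj k).reachable⟩
    simp [this]
  obtain ⟨c, hc⟩ := (finrank_eq_one_iff_of_nonzero' _ hne).1 hk1 ⟨_, hS⟩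
  have hc' := congrArg Subtype.val hc
  have ha := congrFun hc' a
  have hb := congrFun hc' b
  simp at ha
  simp [hab, ha] at hb
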